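/- Every effectively if-essentially ℱ-incomplete c.e. theory is effectively ef-essentially ℱ-incomplete. -/

import Mathlib

open FirstOrder FirstOrder.Language

namespace PourEl

/-! ## Recursion-theoretic notions -/

/-- The `i`-th computably enumerable subset of `ℕ` (the domain of the `i`-th
partial computable function). -/
def WSet (i : ℕ) : Set ℕ :=
  {n | ((Denumerable.ofNat Nat.Partrec.Code i).eval n).Dom}

/-- A set of natural numbers is computably enumerable. -/
def CE (A : Set ℕ) : Prop := ∃ i, A = WSet i

/-- A set of natural numbers is computable. -/
def Comp (A : Set ℕ) : Prop := ComputablePred (· ∈ A)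

/-- Disjoint sets `X`, `Y` are computably separable iff some computable set
contains `X` and is disjoint from `Y`. -/
def CompSeparable (X Y : Set ℕ) : Prop :=
  ∃ Z : Set ℕ, Comp Z ∧ X ⊆ Z ∧ Y ∩ Z = ∅

/-- Computable inseparability. -/
def CompInseparable (X Y : Set ℕ) : Prop := ¬ CompSeparable X Y

/-- `Z` and `W` weakly biseparate `X` and `Y`. -/
def WeaklyBiseparate {α : Type*} (Z W X Y : Set α) : Prop :=
  X ⊆ Z ∧ Y ⊆ W ∧ Z ∩ Y = ∅ ∧ W ∩ X = ∅

/-- `Z` and `W` biseparate `X` and `Y`. -/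
def Biseparate {α : Type*} (Z W X Y : Set α) : Prop :=
  WeaklyBiseparate Z W X Y ∧ Z ∩ W = ∅

/-! ## Logical notions -/

variable {L : FirstOrder.Language}

/-- Provability: `φ` is a first-order consequence of `U` (by Gödel completeness,
semantic consequence). -/
def Prv (U : L.Theory) (φ : L.Sentence) : Prop := U ⊨ᵇ φ

/-- `U_p`: the set of theorems of `U`. -/
def Thms (U : L.Theory) : Set L.Sentence := {φ | Prv U φ}

/-- `U_r`: the set of refutable sentences of `U`. -/
def Refut (U : L.Theory) : Set L.Sentence := {φ | Prv U ∼φ}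

/-- Consistency: `U ⊬ ⊥`. -/
def Consistent (U : L.Theory) : Prop := ¬ Prv U ⊥

/-- `φ` is independent of `U`: `U` proves neither `φ` nor `¬φ`. -/
def Independent (U : L.Theory) (φ : L.Sentence) : Prop := ¬ Prv U φ ∧ ¬ Prv U ∼φ

/-- `U` is incomplete: some sentence is independent of it. -/
def Incomplete (U : L.Theory) : Prop := ∃ φ, Independent U φ

/-- Mono-consequence: `U ⊢_m φ` iff `ψ ⊢ φ` for some `ψ ∈ U`. -/
def MPrv (U : L.Theory) (φ : L.Sentence) : Prop := ∃ ψ ∈ U, Prv {ψ} φ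

/-- `U_m`: the set of mono-theorems of `U`. -/
def MThms (U : L.Theory) : Set L.Sentence := {φ | MPrv U φ}

/-- `U_n`: the set of mono-refutable sentences of `U`. -/
def MRefut (U : L.Theory) : Set L.Sentence := {φ | MPrv U ∼φ}

/-- Mono-consistency: every member is consistent by itself. -/
def MonoConsistent (U : L.Theory) : Prop := ∀ ψ ∈ U, Consistent ({ψ} : L.Theory)

/-- `Û`: the set of all non-empty finite conjunctions of elements of `U`. -/
def hat (U : L.Theory) : L.Theory :=
  {φ | ∃ (ψ : L.Sentence) (l : List L.Sentence),
    ψ ∈ U ∧ (∀ χ ∈ l, χ ∈ U) ∧ φ = l.foldl (· ⊓ ·) ψ}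

/-- `U ⋓ V`. -/
def Cup (U V : L.Theory) : L.Theory :=
  {χ | ∃ φ ∈ U, ∃ ψ ∈ V, χ = φ ⊓ ψ}

/-- `U ⋐ V`: for every `φ ∈ U` and `ψ ∈ V` there is `ρ ∈ V` with `ρ ⊢ φ ∧ ψ`. -/
def Ssub (U V : L.Theory) : Prop :=
  ∀ φ ∈ U, ∀ ψ ∈ V, ∃ ρ ∈ V, Prv {ρ} (φ ⊓ ψ)

/-! ## Gödel numbering -/

/-- A Gödel numbering of the sentences of a (countable) signature: a bijective
coding of sentences by natural numbers that is effective for the basic syntactic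
operations, and for which the theorems of a c.e. theory can be effectively
enumerated from an index of the theory. -/
structure Numbering (L : FirstOrder.Language) where
  equiv : L.Sentence ≃ ℕ
  neg_comp : Computable fun n => equiv ∼(equiv.symm n)
  inf_comp : Computable₂ fun m n => equiv (equiv.symm m ⊓ equiv.symm n)
  imp_comp : Computable₂ fun m n => equiv (equiv.symm m ⟹ equiv.symm n)
  iff_comp : Computable₂ fun m n => equiv (equiv.symm m ⇔ equiv.symm n)
  thmIdx : ℕ → ℕ
  thmIdx_comp : Computable thmIdx
  thmIdx_spec : ∀ i, WSet (thmIdx i) = equiv '' Thms (equiv.symm '' WSet i)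

namespace Numbering

variable (g : Numbering L)

/-- The code of a sentence. -/
def code (φ : L.Sentence) : ℕ := g.equiv φ

/-- The set of codes of a set of sentences. -/
def codes (S : Set L.Sentence) : Set ℕ := g.equiv '' S

/-- The theory axiomatised by the `i`-th c.e. set (identified with a set of
sentences via the numbering). -/
def thy (i : ℕ) : L.Theory := g.equiv.symm '' WSet i

/-- The theory `U` is computably enumerable (with respect to the numbering). -/
def CEThy (U : L.Theory) : Prop := CE (g.codes U)

end Numbering


/-- `Φ` witnesses that `U` is effectively if-essentially `F`-incomplete: whenever
`W i` is a consistent finite extension of `U` (as a set of axioms), `Φ i`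
converges to (the code of) a sentence in `F (W i)` independent of `W i`. -/
def IfEssWitness (g : Numbering L) (U : L.Theory)
    (F : Set L.Sentence → Set L.Sentence) (Φ : ℕ →. ℕ) : Prop :=
  ∀ i, (∃ Γ : Finset L.Sentence, g.thy i = U ∪ (Γ : Set L.Sentence)) →
    Consistent (g.thy i) →
    ∃ n ∈ Φ i, ∃ φ : L.Sentence, g.code φ = n ∧ φ ∈ F (g.thy i) ∧ Independent (g.thy i) φ

/-- `U` is effectively if-essentially `F`-incomplete. -/
def EffIfEssIncomplete (g : Numbering L) (U : L.Theory)
    (F : Set L.Sentence → Set L.Sentence) : Prop :=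
  ∃ Φ : ℕ →. ℕ, Partrec Φ ∧ IfEssWitness g U F Φ

/-- `U` is effectively ef-essentially `F`-incomplete: a total computable function
on (codes of) sentences produces, for each `φ` consistent with `U`, a sentence
independent of `U ∪ {φ}` lying in `F (U ∪ {φ})`. -/
def EffEfEssIncomplete (g : Numbering L) (U : L.Theory)
    (F : Set L.Sentence → Set L.Sentence) : Prop :=
  ∃ Φ : ℕ → ℕ, Computable Φ ∧ ∀ φ : L.Sentence,
    Consistent (U ∪ {φ}) →
    Independent (U ∪ {φ}) (g.equiv.symm (Φ (g.code φ))) ∧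
    g.equiv.symm (Φ (g.code φ)) ∈ F (U ∪ {φ})

/-- An s-m-n style index function for adding one element to a c.e. set. -/
theorem exists_insert_index (e : ℕ) :
    ∃ s : ℕ → ℕ, Computable s ∧ ∀ n, WSet (s n) = WSet e ∪ {n} := by
  let c := Denumerable.ofNat Nat.Partrec.Code e
  have hp : Partrec (fun p : ℕ => bif (p.unpair.2 == p.unpair.1) then Part.some 0
      else c.eval p.unpair.2) := by
    have h1 : Computable (fun p : ℕ => p.unpair.1) :=
      (Primrec.fst.comp Primrec.unpair).to_comp
    have h2 : Computable (fun p : ℕ => p.unpair.2) :=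
      (Primrec.snd.comp Primrec.unpair).to_comp
    refine Partrec.cond ?_ (Computable.const 0).partrec ?_
    · exact (Primrec.beq.to_comp).comp h2 h1
    · exact (Partrec.nat_iff.2 (Nat.Partrec.Code.exists_code.2 ⟨c, rfl⟩)).comp h2
  obtain ⟨d, hd⟩ := Nat.Partrec.Code.exists_code.1 (Partrec.nat_iff.1 hp)
  refine ⟨fun n => Encodable.encode (Nat.Partrec.Code.curry d n), ?_, ?_⟩
  · exact (Primrec.encode.comp
      (Nat.Partrec.Code.primrec₂_curry.comp (Primrec.const d) Primrec.id)).to_comp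
  · intro n
    ext m
    simp only [WSet, Set.mem_setOf_eq, Denumerable.ofNat_encode, Nat.Partrec.Code.eval_curry,
      hd, Nat.unpair_pair, Set.mem_union, Set.mem_singleton_iff]
    by_cases hmn : m = n
    · simp [hmn]
    · have : (m == n) = false := by simpa using hmn
      simp [hmn, this, c]

/-- Every effectively if-essentially `F`-incomplete c.e. theory
is effectively ef-essentially `F`-incomplete. -/
theorem statement12 {L : FirstOrder.Language} (g : Numbering L) (U : L.Theory)
    (hU : g.CEThy U)
    (F : Set L.Sentence → Set L.Sentence)
    (h : EffIfEssIncomplete g U F) :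
    EffEfEssIncomplete g U F := by
  obtain ⟨Φ, hΦ, hw⟩ := h
  obtain ⟨e, he⟩ := hU
  obtain ⟨s, hs, hsW⟩ := exists_insert_index e
  have hthy : ∀ φ : L.Sentence, g.thy (s (g.code φ)) = U ∪ {φ} := by
    intro φ
    rw [Numbering.thy, hsW, ← he, Numbering.codes, Set.image_union, Set.image_singleton]
    simp [Numbering.code, Set.image_image]
  -- the search for an inconsistency
  let b : ℕ := g.equiv ⊥
  let R : ℕ →. ℕ := fun n => (Denumerable.ofNat Nat.Partrec.Code (g.thmIdx (s n))).eval b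
  have hR : Partrec R := by
    have h1 : Computable fun n => Denumerable.ofNat Nat.Partrec.Code (g.thmIdx (s n)) :=
      (Computable.ofNat _).comp (g.thmIdx_comp.comp hs)
    exact Nat.Partrec.Code.eval_part.comp h1 (Computable.const b)
  have hRdom : ∀ φ : L.Sentence, (R (g.code φ)).Dom ↔ ¬ Consistent (U ∪ {φ}) := by
    intro φ
    have h1 : (R (g.code φ)).Dom ↔ b ∈ WSet (g.thmIdx (s (g.code φ))) := Iff.rfl
    have h2 : g.equiv.symm '' WSet (s (g.code φ)) = U ∪ {φ} := hthy φ
    rw [h1, g.thmIdx_spec, h2]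
    simp [b, Thms, Consistent]
  have hP : ∀ φ : L.Sentence, Consistent (U ∪ {φ}) → ∃ n ∈ Φ (s (g.code φ)),
      ∃ ψ : L.Sentence, g.code ψ = n ∧ ψ ∈ F (U ∪ {φ}) ∧ Independent (U ∪ {φ}) ψ := by
    intro φ hc
    have := hw (s (g.code φ)) ⟨{φ}, by rw [hthy]; simp⟩ (by rw [hthy]; exact hc)
    rwa [hthy] at this
  obtain ⟨k, hk, hkspec⟩ := Partrec.merge' (hΦ.comp hs) hR
  have hdom : ∀ n, (k n).Dom := by
    intro n
    rw [(hkspec n).2]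
    obtain ⟨φ, rfl⟩ : ∃ φ, g.code φ = n := g.equiv.surjective n
    by_cases hc : Consistent (U ∪ {φ})
    · obtain ⟨m, hm, -⟩ := hP φ hc
      exact Or.inl (Part.dom_iff_mem.2 ⟨m, hm⟩)
    · exact Or.inr ((hRdom φ).2 hc)
  refine ⟨fun n => (k n).get (hdom n), ?_, ?_⟩
  · exact hk.of_eq fun n => (Part.some_get (hdom n)).symm
  · intro φ hc
    obtain ⟨m, hm, ψ, hψ, hF, hI⟩ := hP φ hc
    have hval : (k (g.code φ)).get (hdom _) = m := by
      rcases (hkspec (g.code φ)).1 _ (Part.get_mem (hdom (g.code φ))) with h1 | h1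
      · exact Part.mem_unique h1 hm
      · exact absurd hc ((hRdom φ).1 (Part.dom_iff_mem.2 ⟨_, h1⟩))
    have hEq : g.equiv.symm ((k (g.code φ)).get (hdom _)) = ψ := by
      rw [hval, ← hψ]; simp [Numbering.code]
    simp only [hEq]
    exact ⟨hI, hF⟩

end PourEl
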